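/- Acting twice on the Poincaré bundle: for all x₁, x̂₁, x₂, x̂₂ ∈ ℝⁿ and all p ∈ P, ρ_{x₁,x̂₁}(ρ_{x₂,x̂₂}(p)) = ρ_{x₁+x₂, x̂₁+x̂₂}(p) − ↑(x₁⋅x̂₂). -/

import Mathlib

open Matrix

noncomputable section

/-- The circle `T = ℝ/ℤ`. -/
abbrev Tc : Type := AddCircle (1 : ℝ)

/-- Componentwise inclusion `ℤⁿ → ℝⁿ`. -/
def zc {n : ℕ} (m : Fin n → ℤ) : Fin n → ℝ := fun i => (m i : ℝ)

/-- The Poincaré relation on `ℝⁿ × ℝⁿ × T`: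
`(a,â,t) ~ (a+m, â+m̂, t+↑(m⋅â))` for `m, m̂ ∈ ℤⁿ`. -/
def PoincareRel (n : ℕ) (p q : (Fin n → ℝ) × (Fin n → ℝ) × Tc) : Prop :=
  ∃ m mhat : Fin n → ℤ,
    q.1 = p.1 + zc m ∧ q.2.1 = p.2.1 + zc mhat ∧
      q.2.2 = p.2.2 + ((dotProduct (zc m) p.2.1 : ℝ) : Tc)

/-- The total space `P` of the Poincaré bundle: the quotient of `ℝⁿ × ℝⁿ × T`
by the Poincaré relation. -/
def PB (n : ℕ) : Type := Quot (PoincareRel n)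

/-- The class `[a, â, t]` in `P`. -/
def mk3 {n : ℕ} (a ahat : Fin n → ℝ) (t : Tc) : PB n := Quot.mk _ (a, ahat, t)

/-- The circle action on `P`: `[a, â, t] + s := [a, â, t + s]` (well defined). -/
def PBadd {n : ℕ} (p : PB n) (s : Tc) : PB n :=
  Quot.lift (fun q => mk3 q.1 q.2.1 (q.2.2 + s))
    (fun r r' h => by
      obtain ⟨m, mhat, h1, h2, h3⟩ := h
      refine Quot.sound ⟨m, mhat, h1, h2, ?_⟩
      show r'.2.2 + s = r.2.2 + s + ((dotProduct (zc m) r.2.1 : ℝ) : Tc)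
      rw [h3]; abel)
    p

/-- `ρ_{x,x̂}` is the map induced on `P` by
`(b, b̂, t) ↦ (b − x, b̂ − x̂, t − ↑((b−x)⋅x̂))`. -/
def IsRho {n : ℕ} (x xhat : Fin n → ℝ) (rho : PB n → PB n) : Prop :=
  ∀ (b bhat : Fin n → ℝ) (t : Tc),
    rho (mk3 b bhat t) =
      mk3 (b - x) (bhat - xhat) (t - ((dotProduct (b - x) xhat : ℝ) : Tc))

/-- **acting twice on the Poincaré bundle.**  For all `x₁, x̂₁, x₂, x̂₂ ∈ ℝⁿ`
and all `p ∈ P`:  `ρ_{x₁,x̂₁}(ρ_{x₂,x̂₂}(p)) = ρ_{x₁+x₂, x̂₁+x̂₂}(p) − ↑(x₁⋅x̂₂)`. -/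
theorem statement6 (n : ℕ) (x1 xhat1 x2 xhat2 : Fin n → ℝ)
    (rho1 rho2 rho3 : PB n → PB n)
    (h1 : IsRho x1 xhat1 rho1) (h2 : IsRho x2 xhat2 rho2)
    (h3 : IsRho (x1 + x2) (xhat1 + xhat2) rho3) :
    ∀ p : PB n,
      rho1 (rho2 p) = PBadd (rho3 p) (-((dotProduct x1 xhat2 : ℝ) : Tc)) := by
  -- Every class has a representative, and both sides are explicit there.
  rintro ⟨b, bhat, t⟩
  change rho1 (rho2 (mk3 b bhat t)) = PBadd (rho3 (mk3 b bhat t)) _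
  rw [h2, h1, h3]
  change _ = mk3 _ _ (_ + _)
  dsimp only
  congr 1
  · abel
  · abel
  -- By bilinearity `(b - (x1 + x2)) ⬝ᵥ xhat2 + x1 ⬝ᵥ xhat2 = (b - x2) ⬝ᵥ xhat2`,
  -- which is where the correction by `x1 ⬝ᵥ xhat2` comes from.
  · rw [← sub_eq_add_neg, sub_sub t, ← AddCircle.coe_add, sub_sub t, ← AddCircle.coe_add]
    congr 2
    simp only [sub_dotProduct, add_dotProduct, dotProduct_add]
    ring
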